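/- arXiv:1310.5921 — 2 statements merged into one kernel-verified Lean document; each statement's English description precedes it below -/
import Mathlib

section
/- Let λ and α be nonzero real numbers and k ≥ 1 an integer. For every real number t with λ e^{α t} ≠ 1, the k-th power of the function h(t) = 1/(λ e^{α t} − 1) satisfies (1/(λ e^{α t} − 1))^k = (1/(k−1)!) Σ_{m=1}^{k} ((−1)^{m−1}/α^{m−1}) s(k, m) h^{(m−1)}(t), where h^{(m−1)} denotes the (m−1)-st derivative of h (with h^{(0)} = h). -/
open Real Finset

/-- Signed Stirling numbers of the first kind, real-valued: the coefficient of `x^m` in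
`x (x-1) ⋯ (x-k+1)`. -/
noncomputable def s1 (k m : ℕ) : ℝ := (descPochhammer ℝ k).coeff m

/-!
The function `h t = 1 / (l * exp (a * t) - 1)` solves the logistic equation `D h = h + h ^ 2` for
`D = (-1 / a) d/dt`. Hence `(D - n) h ^ n = n h ^ (n + 1)`, and by induction
`n! h ^ (n + 1) = (D - 1) ⋯ (D - n) h`. Since `X (X - 1) ⋯ (X - n)` is the falling factorial of
degree `n + 1`, expanding the operator in powers of `D` produces the Stirling numbers.
-/

open Polynomial Topology

section FallingFactorial

theorem coeff_descPochhammer_comp_X_sub_one {R : Type*} [Ring R] (n j : ℕ) :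
    ((descPochhammer R n).comp (X - 1)).coeff j = (descPochhammer R (n + 1)).coeff (j + 1) := by
  rw [descPochhammer_succ_left, coeff_X_mul]

theorem natDegree_descPochhammer_comp_X_sub_one {R : Type*} [Ring R] [NoZeroDivisors R]
    [Nontrivial R] (n : ℕ) : ((descPochhammer R n).comp (X - 1)).natDegree = n := by
  rw [natDegree_comp, descPochhammer_natDegree, ← C_1, natDegree_X_sub_C, mul_one]

theorem descPochhammer_succ_comp_X_sub_one_eq_X_mul_sub {R : Type*} [CommRing R] (n : ℕ) :
    (descPochhammer R (n + 1)).comp (X - 1) =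
      X * (descPochhammer R n).comp (X - 1) -
        ((n : R) + 1) • (descPochhammer R n).comp (X - 1) := by
  rw [descPochhammer_succ_right, mul_comp, sub_comp, X_comp, natCast_comp, smul_eq_C_mul, C_add,
    C_1, C_eq_natCast]
  ring

end FallingFactorial

section DifferentialOperator

variable {𝕜 : Type*} [NontriviallyNormedField 𝕜]

theorem hasDerivAt_iteratedDeriv {F : Type*} [NormedAddCommGroup F] [NormedSpace 𝕜 F]
    {f : 𝕜 → F} {x : 𝕜} {n : WithTop ℕ∞} {m : ℕ} (hf : ContDiffAt 𝕜 n f x) (hmn : m < n) :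
    HasDerivAt (iteratedDeriv m f) (iteratedDeriv (m + 1) f x) x := by
  rw [iteratedDeriv_succ, hasDerivAt_deriv_iff, ← differentiableWithinAt_univ,
    ← iteratedDerivWithin_univ]
  exact hf.contDiffWithinAt.differentiableWithinAt_iteratedDerivWithin hmn (by simp)

/-- The value at `x` of `p(c d/dx) f`, where `p` is a polynomial with constant coefficients, as a
linear functional of `p`. -/
noncomputable def polyDeriv (c : 𝕜) (f : 𝕜 → 𝕜) (x : 𝕜) : 𝕜[X] →ₗ[𝕜] 𝕜 :=
  lsum fun j => LinearMap.mulRight 𝕜 (c ^ j * iteratedDeriv j f x)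

theorem polyDeriv_monomial (c : 𝕜) (f : 𝕜 → 𝕜) (x : 𝕜) (j : ℕ) (r : 𝕜) :
    polyDeriv c f x (monomial j r) = r * (c ^ j * iteratedDeriv j f x) :=
  sum_monomial_index r _ (zero_mul _)

theorem polyDeriv_one (c : 𝕜) (f : 𝕜 → 𝕜) (x : 𝕜) : polyDeriv c f x 1 = f x := by
  simpa using polyDeriv_monomial c f x 0 1

theorem polyDeriv_eq_sum_range (c : 𝕜) (f : 𝕜 → 𝕜) (x : 𝕜) (p : 𝕜[X]) :
    polyDeriv c f x p =
      ∑ j ∈ range (p.natDegree + 1), p.coeff j * (c ^ j * iteratedDeriv j f x) :=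
  sum_over_range p fun _ => zero_mul _

theorem polyDeriv_X_mul {f : 𝕜 → 𝕜} {c x : 𝕜} {p : 𝕜[X]}
    (hf : ContDiffAt 𝕜 (p.natDegree + 1) f x) :
    polyDeriv c f x (X * p) = c * deriv (fun y => polyDeriv c f y p) x := by
  have hderiv : HasDerivAt (fun y => polyDeriv c f y p)
      (∑ j ∈ p.support, p.coeff j * (c ^ j * iteratedDeriv (j + 1) f x)) x := by
    refine HasDerivAt.fun_sum fun j hj => ?_
    have hj_lt : (j : WithTop ℕ∞) < p.natDegree + 1 := by
      exact_mod_cast Nat.lt_succ_of_le (le_natDegree_of_mem_supp j hj)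
    exact ((hasDerivAt_iteratedDeriv hf hj_lt).const_mul _).const_mul _
  rw [hderiv.deriv, mul_sum]
  conv_lhs => rw [p.as_sum_support, mul_sum, map_sum]
  refine sum_congr rfl fun j _ => ?_
  rw [X_mul_monomial, polyDeriv_monomial]
  ring

end DifferentialOperator

section LogisticEquation

variable {𝕜 : Type*} [NontriviallyNormedField 𝕜] {f : 𝕜 → 𝕜} {b c x : 𝕜}

theorem mul_deriv_pow_succ_of_logistic (hf : DifferentiableAt 𝕜 f x)
    (hode : c * deriv f x = f x + b * f x ^ 2) (n : ℕ) :
    c * deriv (fun y => f y ^ (n + 1)) x = (n + 1) * (f x ^ (n + 1) + b * f x ^ (n + 2)) := by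
  rw [deriv_fun_pow hf, Nat.add_sub_cancel, Nat.cast_succ]
  linear_combination (n + 1) * f x ^ n * hode

theorem polyDeriv_descPochhammer_comp_of_logistic {n : ℕ} (hf : ContDiffAt 𝕜 n f x)
    (hode : ∀ᶠ y in 𝓝 x, c * deriv f y = f y + b * f y ^ 2) :
    polyDeriv c f x ((descPochhammer 𝕜 n).comp (X - 1)) =
      n.factorial * b ^ n * f x ^ (n + 1) := by
  induction n generalizing x with
  | zero => simp [polyDeriv_one]
  | succ n ih =>
    have hfn : ContDiffAt 𝕜 n f x := hf.of_le (by exact_mod_cast n.le_succ)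
    have ih_near : (fun y => polyDeriv c f y ((descPochhammer 𝕜 n).comp (X - 1))) =ᶠ[𝓝 x]
        fun y => n.factorial * b ^ n * f y ^ (n + 1) := by
      filter_upwards [hfn.eventually (by simp), hode.eventually_nhds] with y using ih
    have hpow : c * deriv (fun y => f y ^ (n + 1)) x =
        (n + 1) * (f x ^ (n + 1) + b * f x ^ (n + 2)) :=
      mul_deriv_pow_succ_of_logistic (hf.differentiableAt (by simp)) hode.self_of_nhds n
    rw [descPochhammer_succ_comp_X_sub_one_eq_X_mul_sub, map_sub, map_smul,
      polyDeriv_X_mul (by simpa [natDegree_descPochhammer_comp_X_sub_one] using hf),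
      ih_near.deriv_eq, ih hfn hode, deriv_const_mul_field, Nat.factorial_succ, smul_eq_mul]
    push_cast
    linear_combination n.factorial * b ^ n * hpow

theorem sum_coeff_descPochhammer_mul_iteratedDeriv_of_logistic {n : ℕ} (hf : ContDiffAt 𝕜 n f x)
    (hode : ∀ᶠ y in 𝓝 x, c * deriv f y = f y + b * f y ^ 2) :
    ∑ j ∈ range (n + 1),
        (descPochhammer 𝕜 (n + 1)).coeff (j + 1) * (c ^ j * iteratedDeriv j f x) =
      n.factorial * b ^ n * f x ^ (n + 1) := by
  rw [← polyDeriv_descPochhammer_comp_of_logistic hf hode, polyDeriv_eq_sum_range,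
    natDegree_descPochhammer_comp_X_sub_one]
  simp only [coeff_descPochhammer_comp_X_sub_one]

end LogisticEquation

section Exponential

open NormedSpace (exp)

variable {𝕜 : Type*} [RCLike 𝕜] {l a t : 𝕜}

theorem analyticAt_one_div_mul_exp_sub_one (ht : l * exp (a * t) ≠ 1) :
    AnalyticAt 𝕜 (fun u => 1 / (l * exp (a * u) - 1)) t := by
  have hexp : AnalyticAt 𝕜 (fun u => exp (a * u)) t :=
    (NormedSpace.exp_analytic (a * t)).fun_comp (analyticAt_const.mul analyticAt_id)
  exact analyticAt_const.div ((analyticAt_const.mul hexp).sub analyticAt_const)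
    (sub_ne_zero.mpr ht)

theorem eventually_mul_exp_ne_one (ht : l * exp (a * t) ≠ 1) :
    ∀ᶠ u in 𝓝 t, l * exp (a * u) ≠ 1 := by
  have hcont : Continuous fun u : 𝕜 => l * exp (a * u) := by fun_prop
  exact hcont.continuousAt.eventually_ne ht

theorem hasDerivAt_one_div_mul_exp_sub_one (ht : l * exp (a * t) ≠ 1) :
    HasDerivAt (fun u => 1 / (l * exp (a * u) - 1))
      (-a * (1 / (l * exp (a * t) - 1) + (1 / (l * exp (a * t) - 1)) ^ 2)) t := by
  have hne : l * exp (a * t) - 1 ≠ 0 := sub_ne_zero.mpr ht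
  have hexp : HasDerivAt (fun u => exp (a * u)) (exp (a * t) * a) t := by
    simpa only [smul_eq_mul, mul_comm] using hasDerivAt_exp_smul_const a t
  simp only [one_div]
  refine (((hexp.const_mul l).sub_const 1).fun_inv hne).congr_deriv ?_
  field_simp
  ring

theorem eventually_logistic_one_div_mul_exp_sub_one (ha : a ≠ 0) (ht : l * exp (a * t) ≠ 1) :
    ∀ᶠ u in 𝓝 t, (-1 / a) * deriv (fun v => 1 / (l * exp (a * v) - 1)) u =
      1 / (l * exp (a * u) - 1) + 1 * (1 / (l * exp (a * u) - 1)) ^ 2 := by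
  have hscale : -1 / a * -a = 1 := by field_simp
  filter_upwards [eventually_mul_exp_ne_one ht] with u hu
  rw [(hasDerivAt_one_div_mul_exp_sub_one hu).deriv, ← mul_assoc, hscale, one_mul, one_mul]

theorem stmt_10_general {𝕜 : Type*} [RCLike 𝕜] (l a : 𝕜) (ha : a ≠ 0) (k : ℕ) (hk : 1 ≤ k)
    (t : 𝕜) (ht : l * exp (a * t) ≠ 1) :
    (1 / (l * exp (a * t) - 1)) ^ k =
      (1 / (Nat.factorial (k - 1) : 𝕜)) *
        ∑ m ∈ Icc 1 k,
          ((-1 : 𝕜) ^ (m - 1) / a ^ (m - 1)) * (descPochhammer 𝕜 k).coeff m *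
            iteratedDeriv (m - 1) (fun u => 1 / (l * exp (a * u) - 1)) t := by
  obtain ⟨n, rfl⟩ := Nat.exists_eq_add_of_le' hk
  have hsum := sum_coeff_descPochhammer_mul_iteratedDeriv_of_logistic (n := n)
    (analyticAt_one_div_mul_exp_sub_one ht).contDiffAt
    (eventually_logistic_one_div_mul_exp_sub_one ha ht)
  rw [one_pow, mul_one] at hsum
  have hfact : (n.factorial : 𝕜) ≠ 0 := Nat.cast_ne_zero.mpr n.factorial_ne_zero
  rw [Nat.add_sub_cancel, one_div_mul_eq_div, eq_div_iff hfact, mul_comm, ← hsum,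
    ← Ico_add_one_right_eq_Icc, sum_Ico_eq_sum_range, Nat.add_sub_cancel]
  refine sum_congr rfl fun j _ => ?_
  rw [Nat.add_sub_cancel_left, add_comm 1 j, div_pow]
  ring

end Exponential

theorem stmt_10 (l a : ℝ) (hl : l ≠ 0) (ha : a ≠ 0) (k : ℕ) (hk : 1 ≤ k) (t : ℝ)
    (ht : l * Real.exp (a * t) ≠ 1) :
    (1 / (l * Real.exp (a * t) - 1)) ^ k =
      (1 / (Nat.factorial (k - 1) : ℝ)) *
        ∑ m ∈ Finset.Icc 1 k,
          ((-1 : ℝ) ^ (m - 1) / a ^ (m - 1)) * s1 k m *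
            iteratedDeriv (m - 1) (fun t : ℝ => 1 / (l * Real.exp (a * t) - 1)) t := by
  rw [Real.exp_eq_exp_ℝ] at ht ⊢
  exact stmt_10_general l a ha k hk t ht
end

section
/- For integers n ≥ k ≥ 1, the signed Stirling number of the first kind satisfies s(n, k) = (−1)^{n + k²} (n−1)! · det M, where M is the (n−k+1) × (n−k+1) matrix whose (i, j) entry, for 1 ≤ i, j ≤ n−k+1, is C(n, k+i−1)/(k+i−2)! if j = 1, and S(k+j−1, k+i−1) if j ≥ 2 (with the convention S(a, b) = 0 when b > a). -/
open Real Finset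

/-- Stirling numbers of the second kind, real-valued, via the explicit formula
`S(k,m) = (1/m!) ∑_{ℓ=1}^m (-1)^(m-ℓ) C(m,ℓ) ℓ^k`; this gives `0` when `m > k`. -/
noncomputable def S2 (k m : ℕ) : ℝ :=
  (1 / (Nat.factorial m : ℝ)) *
    ∑ ℓ ∈ Finset.Icc 1 m, (-1 : ℝ) ^ (m - ℓ) * (Nat.choose m ℓ : ℝ) * (ℓ : ℝ) ^ k

/-!
Write `c` and `S` for the unsigned Stirling numbers of the first and second kind. Composing the two
triangles gives the Lah numbers: `L(n, i) = ∑ j, c(n, j) S(j, i)`, which equal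
`(n-1)! / (i-1)! * C(n, i)`. Restricted to indices `i, j ≥ k`, this says that
`(c(n, k), c(n, k+1), …)` solves a linear system whose matrix `S(j, i)` is unitriangular and whose
right-hand side is, up to the factor `(n-1)!`, the first column in the theorem. Cramer's rule for
the unknown `c(n, k)` is the claimed formula. The explicit alternating sum for `m! * S(k, m)` is the
`m`-th forward difference of `x ↦ x ^ k` at `0`, and its recurrence in `k` is the discrete Leibniz
rule for `x * f x`.
-/

section ForwardDifference

open scoped fwdDiff Nat

variable {R : Type*} [CommRing R]

lemma fwdDiff_id_mul (f : R → R) :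
    Δ_[1] (fun x ↦ x * f x) = (fun x ↦ x * Δ_[1] f x) + Δ_[1] f + f := by
  ext x
  simp only [fwdDiff, Pi.add_apply]
  ring

lemma fwdDiff_iter_succ_id_mul (m : ℕ) (f : R → R) (y : R) :
    (Δ_[1])^[m + 1] (fun x ↦ x * f x) y =
      (y + (m + 1)) * (Δ_[1])^[m + 1] f y + (m + 1) * (Δ_[1])^[m] f y := by
  induction m generalizing f with
  | zero =>
    simp only [zero_add, Function.iterate_one, Function.iterate_zero, id_eq, fwdDiff_id_mul,
      Pi.add_apply, Nat.cast_zero]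
    ring
  | succ m ih =>
    rw [Function.iterate_succ_apply, fwdDiff_id_mul, fwdDiff_iter_add, fwdDiff_iter_add,
      Pi.add_apply, Pi.add_apply, ih]
    simp only [← Function.iterate_succ_apply]
    push_cast
    ring

lemma fwdDiff_iter_pow_zero_eq_factorial_mul_stirlingSecond (k m : ℕ) :
    (Δ_[1])^[m] (fun x : R ↦ x ^ k) 0 = m ! * Nat.stirlingSecond k m := by
  induction k generalizing m with
  | zero =>
    cases m with
    | zero => simp
    | succ m =>
      rw [fwdDiff_iter_pow_eq_zero_of_lt m.succ_pos]
      simp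
  | succ k ih =>
    cases m with
    | zero => simp
    | succ m =>
      simp only [pow_succ']
      rw [fwdDiff_iter_succ_id_mul, ih, ih, Nat.stirlingSecond_succ_succ, Nat.factorial_succ]
      push_cast
      ring

lemma sum_neg_one_pow_mul_choose_mul_pow (k m : ℕ) :
    ∑ l ∈ range (m + 1), (-1 : R) ^ (m - l) * m.choose l * (l : R) ^ k =
      m ! * Nat.stirlingSecond k m := by
  rw [← fwdDiff_iter_pow_zero_eq_factorial_mul_stirlingSecond, fwdDiff_iter_eq_sum_shift]
  simp

end ForwardDifference

lemma S2_eq_stirlingSecond {k : ℕ} (hk : k ≠ 0) (m : ℕ) : S2 k m = Nat.stirlingSecond k m := by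
  have hsum := sum_neg_one_pow_mul_choose_mul_pow (R := ℝ) k m
  rw [range_eq_Ico, sum_eq_sum_Ico_succ_bot m.succ_pos, Nat.cast_zero, zero_pow hk, mul_zero,
    zero_add, zero_add, Nat.succ_eq_add_one, Ico_add_one_right_eq_Icc] at hsum
  rw [S2, hsum, one_div, inv_mul_cancel_left₀ (by positivity)]

lemma coeff_descPochhammer {R : Type*} [CommRing R] (n k : ℕ) :
    (descPochhammer R n).coeff k = (-1) ^ (n + k) * Nat.stirlingFirst n k := by
  induction n generalizing k with
  | zero => cases k <;> simp [Polynomial.coeff_one]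
  | succ n ih =>
    rw [descPochhammer_succ_right, mul_sub, Polynomial.coeff_sub, ← Polynomial.C_eq_natCast,
      Polynomial.coeff_mul_C]
    cases k with
    | zero =>
      rw [Polynomial.coeff_mul_X_zero, ih]
      cases n <;> simp
    | succ k =>
      rw [Polynomial.coeff_mul_X, ih, ih, Nat.stirlingFirst_succ_succ]
      push_cast
      ring

section Lah

open scoped Nat

/-- The unsigned Lah number `L(n, k)`, counting the partitions of `n` elements into `k` nonempty
linearly ordered blocks, encoded like `Nat.stirlingFirst` by its triangular recurrence. -/
def lah : ℕ → ℕ → ℕ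
  | 0, 0 => 1
  | 0, _ + 1 => 0
  | _ + 1, 0 => 0
  | n + 1, k + 1 => (n + k + 1) * lah n (k + 1) + lah n k

lemma lah_succ_succ (n k : ℕ) :
    lah (n + 1) (k + 1) = (n + k + 1) * lah n (k + 1) + lah n k := rfl

lemma sum_stirlingFirst_succ_smul {M : Type*} [AddCommMonoid M] (n : ℕ) (f : ℕ → M) :
    ∑ j ∈ range (n + 2), Nat.stirlingFirst (n + 1) j • f j =
      ∑ j ∈ range (n + 1), Nat.stirlingFirst n j • (n • f j + f (j + 1)) := by
  have hshift : ∑ j ∈ range (n + 1), (n * Nat.stirlingFirst n (j + 1)) • f (j + 1) =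
      ∑ j ∈ range (n + 1), (n * Nat.stirlingFirst n j) • f j := by
    have hzero : n * Nat.stirlingFirst n 0 = 0 := by cases n <;> simp
    rw [sum_range_succ, sum_range_succ', hzero, Nat.stirlingFirst_eq_zero_of_lt n.lt_succ_self]
    simp
  rw [sum_range_succ', Nat.stirlingFirst_succ_zero, zero_smul, add_zero]
  simp only [Nat.stirlingFirst_succ_succ, add_smul, smul_add, sum_add_distrib, hshift, smul_smul,
    mul_comm (Nat.stirlingFirst n _)]

lemma sum_stirlingFirst_mul_stirlingSecond (n k : ℕ) :
    ∑ j ∈ range (n + 1), Nat.stirlingFirst n j * Nat.stirlingSecond j k = lah n k := by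
  induction n generalizing k with
  | zero => cases k <;> simp [lah]
  | succ n ih =>
    cases k with
    | zero => simp [sum_range_succ', lah]
    | succ k =>
      have hrec := sum_stirlingFirst_succ_smul n (Nat.stirlingSecond · (k + 1))
      simp only [smul_eq_mul] at hrec
      rw [hrec, lah_succ_succ, ← ih, ← ih, mul_sum, ← sum_add_distrib]
      refine sum_congr rfl fun j _ ↦ ?_
      rw [Nat.stirlingSecond_succ_succ]
      ring

lemma sum_fin_stirlingFirst_mul_stirlingSecond {n k m a : ℕ} (hn : n < k + m) (ha : k ≤ a) :
    ∑ j : Fin m, Nat.stirlingFirst n (k + j) * Nat.stirlingSecond (k + j) a = lah n a := by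
  have hlow : ∑ j ∈ range k, Nat.stirlingFirst n j * Nat.stirlingSecond j a = 0 :=
    sum_eq_zero fun j hj ↦ by
      rw [Nat.stirlingSecond_eq_zero_of_lt ((mem_range.mp hj).trans_le ha), mul_zero]
  have hhigh : ∀ j ≥ n + 1, Nat.stirlingFirst n j * Nat.stirlingSecond j a = 0 := fun j hj ↦ by
    rw [Nat.stirlingFirst_eq_zero_of_lt hj, zero_mul]
  rw [← sum_stirlingFirst_mul_stirlingSecond, ← eventually_constant_sum hhigh hn,
    sum_range_add, hlow, zero_add,
    sum_range fun j ↦ Nat.stirlingFirst n (k + j) * Nat.stirlingSecond (k + j) a]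

lemma succ_mul_choose_succ_add_mul_choose (n k : ℕ) :
    (k + 1) * n.choose (k + 1) + k * n.choose k = n * n.choose k := by
  rcases le_or_gt k n with hkn | hnk
  · rw [mul_comm (k + 1), Nat.choose_succ_right_eq, mul_comm, ← add_mul, Nat.sub_add_cancel hkn]
  · simp [Nat.choose_eq_zero_of_lt hnk, Nat.choose_eq_zero_of_lt (hnk.trans k.lt_succ_self)]

lemma lah_succ_mul_factorial (n k : ℕ) :
    lah (n + 1) k * k ! = n ! * (k * (n + 1).choose k) := by
  induction n generalizing k with
  | zero => rcases k with _ | _ | k <;> simp [lah, Nat.choose_eq_zero_of_lt]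
  | succ n ih =>
    cases k with
    | zero => simp [lah]
    | succ k =>
      calc lah (n + 2) (k + 1) * (k + 1)!
          = (n + k + 2) * (lah (n + 1) (k + 1) * (k + 1)!) + (k + 1) * (lah (n + 1) k * k !) := by
            rw [lah_succ_succ, Nat.factorial_succ]
            ring
        _ = (k + 1) * n ! * ((n + 1) * (n + 1).choose (k + 1) +
              ((k + 1) * (n + 1).choose (k + 1) + k * (n + 1).choose k)) := by
            rw [ih, ih]
            ring
        _ = (n + 1)! * ((k + 1) * (n + 2).choose (k + 1)) := by
            rw [succ_mul_choose_succ_add_mul_choose, Nat.factorial_succ n,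
              Nat.choose_succ_succ' (n + 1)]
            ring

lemma inv_factorial_mul_lah {K : Type*} [Field K] [CharZero K] {n k : ℕ} (hn : n ≠ 0)
    (hk : k ≠ 0) : ((n - 1)! : K)⁻¹ * lah n k = n.choose k / (k - 1)! := by
  obtain ⟨n, rfl⟩ := Nat.exists_eq_succ_of_ne_zero hn
  obtain ⟨k, rfl⟩ := Nat.exists_eq_succ_of_ne_zero hk
  have hlah : lah (n + 1) (k + 1) * k ! = n ! * (n + 1).choose (k + 1) := by
    refine Nat.eq_of_mul_eq_mul_left k.succ_pos ?_
    rw [mul_left_comm, ← Nat.factorial_succ, lah_succ_mul_factorial, mul_left_comm]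
  have hfact (m : ℕ) : (m ! : K) ≠ 0 := Nat.cast_ne_zero.mpr m.factorial_ne_zero
  rw [Nat.succ_sub_one, Nat.succ_sub_one, inv_mul_eq_div, div_eq_div_iff (hfact n) (hfact k),
    mul_comm (Nat.cast _) (n ! : K)]
  exact_mod_cast hlah

end Lah

section Determinant

open scoped Matrix

variable {R : Type*} [CommRing R]

lemma det_updateCol_mulVec {ι : Type*} [Fintype ι] [DecidableEq ι] (A : Matrix ι ι R)
    (x : ι → R) (j : ι) : (A.updateCol j (A *ᵥ x)).det = x j * A.det := by
  rw [← smul_eq_mul, ← Matrix.det_updateCol_sum]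
  simp only [smul_eq_mul, mul_comm (x _)]
  rfl

variable (R) in
/-- The block of Stirling numbers of the second kind `S(b, a)` with `k ≤ a, b < k + m`. The row
index is the number of blocks, so that the matrix is upper triangular. -/
def stirlingSecondMatrix (k m : ℕ) : Matrix (Fin m) (Fin m) R :=
  Matrix.of fun i j ↦ (Nat.stirlingSecond (k + j) (k + i) : R)

lemma stirlingSecondMatrix_apply (k m : ℕ) (i j : Fin m) :
    stirlingSecondMatrix R k m i j = Nat.stirlingSecond (k + j) (k + i) := rfl

lemma isUpperTriangular_stirlingSecondMatrix (k m : ℕ) :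
    (stirlingSecondMatrix R k m).IsUpperTriangular := fun i j hji ↦ by
  have hlt : k + (j : ℕ) < k + i := Nat.add_lt_add_left hji k
  rw [stirlingSecondMatrix_apply, Nat.stirlingSecond_eq_zero_of_lt hlt, Nat.cast_zero]

lemma det_stirlingSecondMatrix (k m : ℕ) : (stirlingSecondMatrix R k m).det = 1 := by
  rw [Matrix.det_of_isUpperTriangular (isUpperTriangular_stirlingSecondMatrix k m)]
  simp [stirlingSecondMatrix_apply, Nat.stirlingSecond_self]

lemma stirlingSecondMatrix_mulVec_stirlingFirst {n k m : ℕ} (hn : n < k + m) :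
    stirlingSecondMatrix R k m *ᵥ (fun j ↦ (Nat.stirlingFirst n (k + j) : R)) =
      fun i : Fin m ↦ (lah n (k + i) : R) := by
  ext i
  rw [← sum_fin_stirlingFirst_mul_stirlingSecond hn (k.le_add_right i)]
  simp [Matrix.mulVec, dotProduct, stirlingSecondMatrix_apply, mul_comm]

lemma det_updateCol_stirlingSecondMatrix_lah {n k m : ℕ} (hn : n < k + m) (j : Fin m) :
    ((stirlingSecondMatrix R k m).updateCol j fun i : Fin m ↦ (lah n (k + i) : R)).det =
      Nat.stirlingFirst n (k + j) := by
  rw [← stirlingSecondMatrix_mulVec_stirlingFirst hn, det_updateCol_mulVec,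
    det_stirlingSecondMatrix, mul_one]

end Determinant

theorem stmt_11 (n k : ℕ) (hk : 1 ≤ k) (hkn : k ≤ n) :
    s1 n k =
      (-1 : ℝ) ^ (n + k ^ 2) * (Nat.factorial (n - 1) : ℝ) *
        (Matrix.of fun i j : Fin (n - k + 1) =>
          if (j : ℕ) = 0 then
            (Nat.choose n (k + (i : ℕ)) : ℝ) / (Nat.factorial (k + (i : ℕ) - 1) : ℝ)
          else S2 (k + (j : ℕ)) (k + (i : ℕ))).det := by
  have hmatrix : (Matrix.of fun i j : Fin (n - k + 1) =>
      if (j : ℕ) = 0 then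
        (Nat.choose n (k + (i : ℕ)) : ℝ) / (Nat.factorial (k + (i : ℕ) - 1) : ℝ)
      else S2 (k + (j : ℕ)) (k + (i : ℕ))) =
      (stirlingSecondMatrix ℝ k (n - k + 1)).updateCol 0
        ((Nat.factorial (n - 1) : ℝ)⁻¹ • fun i : Fin (n - k + 1) ↦ (lah n (k + i) : ℝ)) := by
    ext i j
    rw [Matrix.of_apply, Matrix.updateCol_apply, Pi.smul_apply, smul_eq_mul,
      inv_factorial_mul_lah (by lia) (by lia), S2_eq_stirlingSecond (by lia),
      stirlingSecondMatrix_apply]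
    simp only [Fin.ext_iff, Fin.val_zero]
  have hsign : (-1 : ℝ) ^ (n + k ^ 2) = (-1) ^ (n + k) :=
    neg_one_pow_congr (by simp [Nat.even_add, Nat.even_pow])
  rw [hmatrix, Matrix.det_updateCol_smul, det_updateCol_stirlingSecondMatrix_lah (by lia),
    Fin.val_zero, add_zero, mul_assoc, mul_inv_cancel_left₀ (by positivity), hsign, s1,
    coeff_descPochhammer]
end
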